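/- (Proposition 5.) Let σ, π*, w be real with 0 < σ ≤ 1/4, 0 < π* < 1, and w > 0, let ψ(π) := w if π ≥ π* and ψ(π) := 0 otherwise, and define π† := w/(4σ(1+w)) and π̄ := π*/(1 − 4σ(1−π*)). Then: (i) if π† ≤ π*, then ΔΦ(σ,π₀) ≥ 0 for every π₀ ∈ (0,1) (the expert chooses the complex rule for every prior); (ii) if π† > π*, then for every π₀ ∈ (0,1), ΔΦ(σ,π₀) < 0 (the expert chooses the simple rule) if and only if π* ≤ π₀ and π₀ < π† and π₀ < π̄. -/

import Mathlib

/-!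
The high posterior `π₁(1)` is at least the prior and the low posterior `π₁(0)` is at least `π*`
exactly when `π₀ ≥ π̄`. If `π₀ < π*` there is no wage to lose, and if `π₀ ≥ max π* π̄` the wage is
kept for sure; in both cases the gain is positive. In the remaining range `π* ≤ π₀ < π̄` the wage is
kept only after the high posterior, and the gain `2σπ₀ + (1/2 + 2σπ₀)w - w` is negative exactly when
`π₀ < π†`. This gives a characterization of a negative gain for all priors
(`wage_gain_neg_iff`), whose right-hand side is contradictory when `π† ≤ π*`.
-/

/-- The characterization of the simple rule, valid without comparing `π†` and `π*`. -/
lemma wage_gain_neg_iff (σ πs w : ℝ) (hσ : 0 < σ) (hσ' : σ ≤ 1/4)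
    (hπs : 0 < πs) (hw : 0 < w) (ψ : ℝ → ℝ)
    (hψ : ψ = fun π => if π ≥ πs then w else 0) (π₀ : ℝ) (h0 : 0 < π₀) (h1 : π₀ < 1) :
    2*σ*π₀
        + ((1/2 + 2*σ*π₀) * ψ ((1 + 4*σ)*π₀ / (1 + 4*σ*π₀))
          + (1/2 - 2*σ*π₀) * ψ ((1 - 4*σ)*π₀ / (1 - 4*σ*π₀)))
        - ψ π₀ < 0
      ↔ πs ≤ π₀ ∧ π₀ < w / (4*σ*(1 + w)) ∧ π₀ < πs / (1 - 4*σ*(1 - πs)) := by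
  have hσπ : 0 < σ * π₀ := mul_pos hσ h0
  have hσπ' : 4 * σ * π₀ < 1 := by nlinarith
  have hσπs : 0 < σ * πs := mul_pos hσ hπs
  have hval : ∀ x, ψ x = if πs ≤ x then w else 0 := fun x => by rw [hψ]
  have hnonneg : ∀ x, 0 ≤ ψ x := fun x => by
    rw [hval]; split_ifs <;> linarith
  have hlow : πs ≤ (1 - 4*σ)*π₀ / (1 - 4*σ*π₀) ↔ πs / (1 - 4*σ*(1 - πs)) ≤ π₀ := by
    rw [le_div_iff₀ (by linarith), div_le_iff₀ (by nlinarith)]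
    constructor <;> intro h <;> linarith
  by_cases hs : πs ≤ π₀
  · have hhigh : πs ≤ (1 + 4*σ)*π₀ / (1 + 4*σ*π₀) := by
      refine hs.trans ?_
      rw [le_div_iff₀ (by linarith)]
      nlinarith
    rw [hval π₀, if_pos hs, hval (_ / (1 + 4*σ*π₀)), if_pos hhigh, hval]
    by_cases hb : πs / (1 - 4*σ*(1 - πs)) ≤ π₀
    · rw [if_pos (hlow.2 hb)]
      constructor
      · intro h
        linarith
      · rintro ⟨-, -, h⟩
        linarith
    · rw [if_neg (mt hlow.1 hb), lt_div_iff₀ (by positivity)]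
      constructor
      · intro h
        exact ⟨hs, by linarith, not_le.1 hb⟩
      · rintro ⟨-, h, -⟩
        linarith
  · rw [hval π₀, if_neg hs]
    have a := mul_nonneg (show 0 ≤ 1/2 + 2*σ*π₀ by linarith)
      (hnonneg ((1 + 4*σ)*π₀ / (1 + 4*σ*π₀)))
    have b := mul_nonneg (show 0 ≤ 1/2 - 2*σ*π₀ by linarith)
      (hnonneg ((1 - 4*σ)*π₀ / (1 - 4*σ*π₀)))
    constructor
    · intro h
      linarith
    · exact fun h => absurd h.1 hs

/-- Proposition 5: with the wage reputation payoff, if π† ≤ π* the expert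
always chooses the complex rule; if π† > π* he chooses the simple rule iff
π* ≤ π₀ < min{π†, π̄}. -/
theorem wage_example_choice (σ πs w : ℝ) (hσ : 0 < σ) (hσ' : σ ≤ 1/4)
    (hπs : 0 < πs) (hπs' : πs < 1) (hw : 0 < w) (ψ : ℝ → ℝ)
    (hψ : ψ = fun π => if π ≥ πs then w else 0) (πdag πbar : ℝ)
    (hπdag : πdag = w / (4*σ*(1 + w))) (hπbar : πbar = πs / (1 - 4*σ*(1 - πs))) :
    (πdag ≤ πs → ∀ π₀ : ℝ, 0 < π₀ → π₀ < 1 →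
        0 ≤ 2*σ*π₀
          + ((1/2 + 2*σ*π₀) * ψ ((1 + 4*σ)*π₀ / (1 + 4*σ*π₀))
            + (1/2 - 2*σ*π₀) * ψ ((1 - 4*σ)*π₀ / (1 - 4*σ*π₀)))
          - ψ π₀)
    ∧ (πdag > πs → ∀ π₀ : ℝ, 0 < π₀ → π₀ < 1 →
        (2*σ*π₀
          + ((1/2 + 2*σ*π₀) * ψ ((1 + 4*σ)*π₀ / (1 + 4*σ*π₀))
            + (1/2 - 2*σ*π₀) * ψ ((1 - 4*σ)*π₀ / (1 - 4*σ*π₀)))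
          - ψ π₀ < 0
        ↔ πs ≤ π₀ ∧ π₀ < πdag ∧ π₀ < πbar)) := by
  subst hπdag hπbar
  have key := wage_gain_neg_iff σ πs w hσ hσ' hπs hw ψ hψ
  refine ⟨fun h π₀ h0 h1 => not_lt.1 fun hneg => ?_, fun _ => key⟩
  obtain ⟨hs, hd, -⟩ := (key π₀ h0 h1).1 hneg
  linarith
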